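/- Let p ≥ 6, u = 2^(1−p), and let o_x, o_y ∈ [1, 1/(8u) − 2]. Let x_h, x_l, y_h, y_l ∈ F_p satisfy |x_l| ≤ o_x·u·|x_h| and |y_l| ≤ o_y·u·|y_h|, and let S = x_h + x_l + y_h + y_l. If accurate double-word addition is executed with R = RD at every operation, then z_h + z_l ≤ S; if it is executed with R = RU at every operation, then z_h + z_l ≥ S. (The sign of the error is consistent with the rounding direction, even in the presence of moderate input overlap.) -/

import Mathlib

/-- The radix-2, precision-`p` floating-point numbers with unlimited exponent range. -/
def Fp (p : ℕ) : Set ℝ := {x : ℝ | ∃ M e : ℤ, |M| ≤ 2 ^ p - 1 ∧ x = (M : ℝ) * (2 : ℝ) ^ e}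

/-- Round toward `-∞`: the largest floating-point number `≤ x`. -/
noncomputable def RD (p : ℕ) (x : ℝ) : ℝ := sSup {f : ℝ | f ∈ Fp p ∧ f ≤ x}

/-- Round toward `+∞`: the smallest floating-point number `≥ x`. -/
noncomputable def RU (p : ℕ) (x : ℝ) : ℝ := sInf {f : ℝ | f ∈ Fp p ∧ x ≤ f}

/-- `y` is a faithful rounding of `x`. -/
def Faithful (p : ℕ) (x y : ℝ) : Prop := y = RD p x ∨ y = RU p x

/-- `2Sum(a,b)` with rounding function `R`. -/
noncomputable def twoSum (R : ℝ → ℝ) (a b : ℝ) : ℝ × ℝ :=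
  let s := R (a + b)
  let a' := R (s - b)
  let b' := R (s - a')
  (s, R (R (a - a') + R (b - b')))

/-- `Fast2Sum(a,b)` with rounding function `R`. -/
noncomputable def fast2Sum (R : ℝ → ℝ) (a b : ℝ) : ℝ × ℝ :=
  let s := R (a + b)
  let d := R (s - a)
  (s, R (b - d))

/-- Accurate double-word addition with rounding function `R`. -/
noncomputable def accurateAdd (R : ℝ → ℝ) (xh xl yh yl : ℝ) : ℝ × ℝ :=
  let s := twoSum R xh yh
  let t := twoSum R xl yl
  let c := R (s.2 + t.1)
  let v := fast2Sum R s.1 c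
  let w := R (t.2 + v.2)
  fast2Sum R v.1 w

/-!
Negation exchanges `RD` and `RU`, so it suffices to treat `RD`.

Each `RD` returns at most its exact argument, so the error can only get the wrong sign where a
rounded result is subtracted: `s + t ≤ a + b` holds for `2Sum` as soon as `s - a'` is a
floating-point number, and for `Fast2Sum` as soon as `s - a` is one. Granting this for all four
calls, `z_h + z_l ≤ v_h + w ≤ v_h + v_l + t_l ≤ s_h + c + t_l ≤ s_h + s_l + t_h + t_l ≤ S`.

For `2Sum` the inner subtraction is always exact. For `Fast2Sum a b` it is exact if `a` is a
multiple of some `2^k` with `|b| < 2^(p+k)`, in particular if `|b| ≤ |a|`. The magnitudes give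
`|b| ≤ |a|` in both calls of `Fast2Sum` unless there is cancellation. If `x_h + y_h` cancels, it is
exact and a multiple of the ulp of the smaller high word, and `c` is below `2^p` such ulps. If
moreover `s_h + c` cancels, then `c = t_h`, this sum is exact as well and a multiple of half the ulp
of `x_l + y_l`, and `|w|` is at most two ulps of `x_l + y_l`.

The thresholds `|x_h + y_h| ≤ (|x_h| + |y_h|) / 3` and `|s_h + c| ≤ |x_l + y_l| / 6` for
cancellation are chosen such that all estimates hold with `u` replaced by its value `1 / 16` at
`p = 5`.
-/

/-! ### Powers of two and floating-point numbers -/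

/-- The integer multiples of `2^e`: the fixed-point numbers with unit `2^e`. -/
noncomputable def grid (e : ℤ) : AddSubgroup ℝ := AddSubgroup.zmultiples ((2 : ℝ) ^ e)

/-- The exponent of the unit in the last place of `x` in precision `p`: for `x ≠ 0` it is the `e`
with `2^(p-1+e) ≤ |x| < 2^(p+e)`. At `x = 0` it has the junk value `1 - p`, for which only the upper
bound holds. -/
noncomputable def ulpExp (p : ℕ) (x : ℝ) : ℤ := Int.log 2 |x| + 1 - p

section Grid

variable {p : ℕ} {e k : ℤ} {x : ℝ}

lemma mem_grid_iff : x ∈ grid e ↔ ∃ m : ℤ, x = m * (2 : ℝ) ^ e := by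
  simp [grid, AddSubgroup.mem_zmultiples_iff, eq_comm]

lemma two_zpow_succ (e : ℤ) : (2 : ℝ) ^ (e + 1) = 2 * (2 : ℝ) ^ e := by
  rw [zpow_add_one₀ two_ne_zero, mul_comm]

lemma two_mul_two_zpow_le_two_zpow (h : e < k) : 2 * (2 : ℝ) ^ e ≤ (2 : ℝ) ^ k := by
  rw [← two_zpow_succ]
  exact zpow_le_zpow_right₀ one_le_two h

lemma two_pow_mul_two_zpow (p : ℕ) (e : ℤ) : (2 : ℝ) ^ p * (2 : ℝ) ^ e = (2 : ℝ) ^ (p + e) := by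
  rw [zpow_add₀ two_ne_zero, zpow_natCast]

lemma two_le_two_pow (hp : 1 ≤ p) : (2 : ℝ) ≤ 2 ^ p :=
  le_self_pow₀ one_le_two (by omega)

lemma grid_antitone : Antitone grid := by
  intro e k h x hx
  obtain ⟨m, rfl⟩ := mem_grid_iff.mp hx
  obtain ⟨n, rfl⟩ := Int.le.dest h
  refine mem_grid_iff.mpr ⟨m * 2 ^ n, ?_⟩
  rw [add_comm e, ← two_pow_mul_two_zpow]
  push_cast
  ring

lemma neg_mem_fp (hx : x ∈ Fp p) : -x ∈ Fp p := by
  obtain ⟨M, e, hM, rfl⟩ := hx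
  exact ⟨-M, e, by rwa [abs_neg], by push_cast; ring⟩

lemma zero_mem_fp (p : ℕ) : (0 : ℝ) ∈ Fp p :=
  ⟨0, 0, by simpa using one_le_pow₀ (one_le_two : (1 : ℤ) ≤ 2), by simp⟩

lemma two_zpow_mem_fp (hp : 1 ≤ p) (e : ℤ) : (2 : ℝ) ^ e ∈ Fp p := by
  have : (2 : ℤ) ≤ 2 ^ p := by exact_mod_cast two_le_two_pow hp
  exact ⟨1, e, by rw [abs_one]; omega, by simp⟩

lemma two_pow_mul_two_zpow_mem_fp (hp : 1 ≤ p) (e : ℤ) : (2 : ℝ) ^ p * (2 : ℝ) ^ e ∈ Fp p := by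
  rw [two_pow_mul_two_zpow]
  exact two_zpow_mem_fp hp _

lemma mem_fp_of_mem_grid (hp : 1 ≤ p) (hx : x ∈ grid e)
    (h : |x| < (2 : ℝ) ^ p * (2 : ℝ) ^ e + (2 : ℝ) ^ e) : x ∈ Fp p := by
  obtain ⟨m, rfl⟩ := mem_grid_iff.mp hx
  have hm : |m| < 2 ^ p + 1 := by
    rw [abs_mul, abs_of_pos (by positivity : (0 : ℝ) < 2 ^ e), ← add_one_mul] at h
    exact_mod_cast lt_of_mul_lt_mul_right h (by positivity)
  rcases (Int.lt_add_one_iff.mp hm).lt_or_eq with hlt | heq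
  · exact ⟨m, e, by omega, rfl⟩
  · have hpow := two_pow_mul_two_zpow_mem_fp hp e
    rcases eq_or_eq_neg_of_abs_eq heq with rfl | rfl
    · exact_mod_cast hpow
    · simpa using neg_mem_fp hpow

lemma mem_grid_or_two_mul_abs_lt (hx : x ∈ Fp p) (e : ℤ) :
    x ∈ grid e ∨ 2 * |x| < (2 : ℝ) ^ p * (2 : ℝ) ^ e := by
  obtain ⟨M, f, hM, rfl⟩ := hx
  rcases le_or_gt e f with hef | hfe
  · exact Or.inl (grid_antitone hef (mem_grid_iff.mpr ⟨M, rfl⟩))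
  · right
    have hM' : |(M : ℝ)| < 2 ^ p := by exact_mod_cast (by omega : |M| < 2 ^ p)
    calc 2 * |(M : ℝ) * 2 ^ f| = |(M : ℝ)| * (2 * 2 ^ f) := by
          rw [abs_mul, abs_of_pos (by positivity : (0 : ℝ) < 2 ^ f)]
          ring
      _ < 2 ^ p * (2 * 2 ^ f) := by gcongr
      _ ≤ 2 ^ p * 2 ^ e := by gcongr; exact two_mul_two_zpow_le_two_zpow hfe

lemma mem_grid_of_le_two_mul_abs (hx : x ∈ Fp p) (h : (2 : ℝ) ^ p * (2 : ℝ) ^ e ≤ 2 * |x|) :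
    x ∈ grid e :=
  (mem_grid_or_two_mul_abs_lt hx e).resolve_right h.not_gt

lemma abs_add_two_zpow_le (hp : 1 ≤ p) (hx : x ∈ Fp p) (h : |x| < (2 : ℝ) ^ p * (2 : ℝ) ^ e) :
    |x| + (2 : ℝ) ^ e ≤ (2 : ℝ) ^ p * (2 : ℝ) ^ e := by
  have he : (0 : ℝ) < 2 ^ e := by positivity
  rcases mem_grid_or_two_mul_abs_lt hx e with hgrid | hsmall
  · obtain ⟨m, rfl⟩ := mem_grid_iff.mp hgrid
    rw [abs_mul, abs_of_pos he] at h ⊢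
    have hm : |m| + 1 ≤ 2 ^ p := by exact_mod_cast lt_of_mul_lt_mul_right h he.le
    rw [← add_one_mul]
    gcongr
    exact_mod_cast hm
  · have := mul_le_mul_of_nonneg_right (two_le_two_pow hp) he.le
    linarith

lemma two_pow_mul_ulp_eq (p : ℕ) (x : ℝ) :
    (2 : ℝ) ^ p * (2 : ℝ) ^ ulpExp p x = (2 : ℝ) ^ (Int.log 2 |x| + 1) := by
  rw [two_pow_mul_two_zpow, ulpExp, add_sub_cancel]

lemma abs_lt_two_pow_mul_ulp (p : ℕ) (x : ℝ) : |x| < (2 : ℝ) ^ p * (2 : ℝ) ^ ulpExp p x := by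
  rw [two_pow_mul_ulp_eq]
  exact_mod_cast Int.lt_zpow_succ_log_self (b := 2) (by norm_num) |x|

lemma two_pow_mul_ulp_le (p : ℕ) (hx : x ≠ 0) :
    (2 : ℝ) ^ p * (2 : ℝ) ^ ulpExp p x ≤ 2 * |x| := by
  rw [two_pow_mul_ulp_eq, two_zpow_succ]
  gcongr
  exact_mod_cast Int.zpow_log_le_self (b := 2) (by norm_num) (abs_pos.mpr hx)

lemma ulpExp_le_of_abs_lt (hx : x ≠ 0) (h : |x| < (2 : ℝ) ^ p * (2 : ℝ) ^ k) :
    ulpExp p x ≤ k := by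
  by_contra! hlt
  have := mul_le_mul_of_nonneg_left (two_mul_two_zpow_le_two_zpow hlt)
    (by positivity : (0 : ℝ) ≤ 2 ^ p)
  linarith [two_pow_mul_ulp_le p hx]

lemma mem_grid_ulpExp (hx : x ∈ Fp p) : x ∈ grid (ulpExp p x) := by
  rcases eq_or_ne x 0 with rfl | h0
  · exact zero_mem _
  · exact mem_grid_of_le_two_mul_abs hx (two_pow_mul_ulp_le p h0)

end Grid

/-! ### Rounding down -/

section RoundDown

variable {p : ℕ} {e k : ℤ} {x c ε : ℝ}

lemma floor_mul_two_zpow_le (e : ℤ) (x : ℝ) : ⌊x / (2 : ℝ) ^ e⌋ * (2 : ℝ) ^ e ≤ x :=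
  (le_div_iff₀ (by positivity)).mp (Int.floor_le _)

lemma lt_floor_mul_two_zpow_add (e : ℤ) (x : ℝ) :
    x < ⌊x / (2 : ℝ) ^ e⌋ * (2 : ℝ) ^ e + (2 : ℝ) ^ e := by
  rw [← add_one_mul]
  exact (div_lt_iff₀ (by positivity)).mp (Int.lt_floor_add_one _)

lemma le_floor_mul_two_zpow_of_mem_grid {f : ℝ} (hf : f ∈ grid e) (h : f ≤ x) :
    f ≤ ⌊x / (2 : ℝ) ^ e⌋ * (2 : ℝ) ^ e := by
  obtain ⟨m, rfl⟩ := mem_grid_iff.mp hf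
  gcongr
  exact Int.le_floor.mpr ((le_div_iff₀ (by positivity)).mpr h)

lemma floor_mul_ulp_mem_fp (hp : 1 ≤ p) (x : ℝ) :
    ⌊x / (2 : ℝ) ^ ulpExp p x⌋ * (2 : ℝ) ^ ulpExp p x ∈ Fp p := by
  refine mem_fp_of_mem_grid hp (mem_grid_iff.mpr ⟨_, rfl⟩) ?_
  have hx := abs_lt.mp (abs_lt_two_pow_mul_ulp p x)
  have hle := floor_mul_two_zpow_le (ulpExp p x) x
  have hlt := lt_floor_mul_two_zpow_add (ulpExp p x) x
  rw [abs_lt]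
  constructor <;> linarith

lemma le_floor_mul_ulp (hp : 1 ≤ p) {f : ℝ} (hf : f ∈ Fp p) (h : f ≤ x) :
    f ≤ ⌊x / (2 : ℝ) ^ ulpExp p x⌋ * (2 : ℝ) ^ ulpExp p x := by
  rcases mem_grid_or_two_mul_abs_lt hf (ulpExp p x) with hgrid | hsmall
  · exact le_floor_mul_two_zpow_of_mem_grid hgrid h
  rcases lt_trichotomy x 0 with hneg | rfl | hpos
  · have := two_pow_mul_ulp_le p hneg.ne
    rw [abs_of_neg hneg] at this
    linarith [neg_abs_le f]
  · simpa using h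
  · -- the lower end `2^(p-1) * ulp` of the binade of `x` lies between `f` and `x`
    obtain ⟨n, rfl⟩ := Nat.exists_eq_add_of_le' hp
    have hbinade := two_pow_mul_ulp_le (n + 1) hpos.ne'
    rw [pow_succ] at hbinade hsmall
    rw [abs_of_pos hpos] at hbinade
    refine le_trans ?_ (le_floor_mul_two_zpow_of_mem_grid
      (f := 2 ^ n * 2 ^ ulpExp (n + 1) x) (mem_grid_iff.mpr ⟨2 ^ n, by norm_cast⟩) (by linarith))
    linarith [le_abs_self f]

lemma rd_eq_floor_mul_ulp (hp : 1 ≤ p) (x : ℝ) :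
    RD p x = ⌊x / (2 : ℝ) ^ ulpExp p x⌋ * (2 : ℝ) ^ ulpExp p x :=
  IsGreatest.csSup_eq ⟨⟨floor_mul_ulp_mem_fp hp x, floor_mul_two_zpow_le _ x⟩,
    fun _ hf => le_floor_mul_ulp hp hf.1 hf.2⟩

lemma rd_mem_fp (hp : 1 ≤ p) (x : ℝ) : RD p x ∈ Fp p := by
  rw [rd_eq_floor_mul_ulp hp]
  exact floor_mul_ulp_mem_fp hp x

lemma rd_le (hp : 1 ≤ p) (x : ℝ) : RD p x ≤ x := by
  rw [rd_eq_floor_mul_ulp hp]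
  exact floor_mul_two_zpow_le _ x

lemma le_rd (hp : 1 ≤ p) {f : ℝ} (hf : f ∈ Fp p) (h : f ≤ x) : f ≤ RD p x := by
  rw [rd_eq_floor_mul_ulp hp]
  exact le_floor_mul_ulp hp hf h

lemma rd_eq_self (hp : 1 ≤ p) (hx : x ∈ Fp p) : RD p x = x :=
  (rd_le hp x).antisymm (le_rd hp hx le_rfl)

lemma rd_mem_grid_ulpExp (hp : 1 ≤ p) (x : ℝ) : RD p x ∈ grid (ulpExp p x) :=
  mem_grid_iff.mpr ⟨_, rd_eq_floor_mul_ulp hp x⟩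

lemma sub_rd_lt_ulp (hp : 1 ≤ p) (x : ℝ) : x - RD p x < (2 : ℝ) ^ ulpExp p x := by
  rw [rd_eq_floor_mul_ulp hp]
  linarith [lt_floor_mul_two_zpow_add (ulpExp p x) x]

lemma sub_rd_lt_of_abs_lt (hp : 1 ≤ p) (h : |x| < (2 : ℝ) ^ p * (2 : ℝ) ^ k) :
    x - RD p x < (2 : ℝ) ^ k := by
  rcases eq_or_ne x 0 with rfl | h0
  · rw [rd_eq_self hp (zero_mem_fp p), sub_zero]
    positivity
  · exact (sub_rd_lt_ulp hp x).trans_le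
      (zpow_le_zpow_right₀ one_le_two (ulpExp_le_of_abs_lt h0 h))

lemma abs_rd_le (hp : 1 ≤ p) (hc : c ∈ Fp p) (h : |x| ≤ c) : |RD p x| ≤ c :=
  abs_le.mpr ⟨le_rd hp (neg_mem_fp hc) (abs_le.mp h).1, (rd_le hp x).trans (abs_le.mp h).2⟩

lemma le_abs_rd (hp : 1 ≤ p) (hc : c ∈ Fp p) (h : c ≤ |x|) : c ≤ |RD p x| := by
  rcases le_abs.mp h with hpos | hneg
  · exact (le_rd hp hc hpos).trans (le_abs_self _)
  · linarith [neg_le_abs (RD p x), rd_le hp x]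

lemma two_pow_mul_ulp_le_two_mul_abs_rd (hp : 1 ≤ p) (hx : x ≠ 0) :
    (2 : ℝ) ^ p * (2 : ℝ) ^ ulpExp p x ≤ 2 * |RD p x| := by
  have hle := two_pow_mul_ulp_le p hx
  have hhalf := two_zpow_mem_fp hp (Int.log 2 |x|)
  rw [two_pow_mul_ulp_eq, two_zpow_succ] at hle ⊢
  linarith [le_abs_rd hp hhalf (x := x) (by linarith)]

lemma ulp_le_mul_abs (hε : 2 ≤ ε * 2 ^ p) (hx : x ≠ 0) :
    (2 : ℝ) ^ ulpExp p x ≤ ε * |x| := by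
  have hε0 : 0 < ε := pos_of_mul_pos_left (two_pos.trans_le hε) (by positivity)
  have h2 := mul_le_mul_of_nonneg_right hε (by positivity : (0 : ℝ) ≤ 2 ^ ulpExp p x)
  have h3 := mul_le_mul_of_nonneg_left (two_pow_mul_ulp_le p hx) hε0.le
  linarith

lemma sub_rd_le_mul_abs (hp : 1 ≤ p) (hε : 2 ≤ ε * 2 ^ p) (x : ℝ) : x - RD p x ≤ ε * |x| := by
  rcases eq_or_ne x 0 with rfl | h0
  · simp [rd_eq_self hp (zero_mem_fp p)]
  · exact (sub_rd_lt_ulp hp x).le.trans (ulp_le_mul_abs hε h0)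

lemma abs_rd_le_mul_abs (hp : 1 ≤ p) (hε : 2 ≤ ε * 2 ^ p) (x : ℝ) :
    |RD p x| ≤ (1 + ε) * |x| := by
  have herr := sub_rd_le_mul_abs hp hε x
  have := abs_sub_abs_le_abs_sub (RD p x) x
  rw [abs_sub_comm, abs_of_nonneg (sub_nonneg.mpr (rd_le hp x))] at this
  linarith

lemma mul_abs_le_abs_rd (hp : 1 ≤ p) (hε : 2 ≤ ε * 2 ^ p) (x : ℝ) :
    (1 - ε) * |x| ≤ |RD p x| := by
  have herr := sub_rd_le_mul_abs hp hε x
  have := abs_sub_abs_le_abs_sub x (RD p x)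
  rw [abs_of_nonneg (sub_nonneg.mpr (rd_le hp x))] at this
  linarith

end RoundDown

/-! ### Exact inner subtractions -/

section InnerSubtraction

variable {p : ℕ} {k : ℤ} {a b : ℝ}

lemma rd_add_sub_left_mem_fp_of_add_mem_fp (hp : 1 ≤ p) (hb : b ∈ Fp p) (h : a + b ∈ Fp p) :
    RD p (a + b) - a ∈ Fp p := by
  rwa [rd_eq_self hp h, add_sub_cancel_left]

lemma rd_add_sub_left_mem_fp_of_mem_grid_ulpExp (hp : 1 ≤ p) (hb : b ∈ Fp p)
    (ha : a ∈ grid (ulpExp p (a + b))) : RD p (a + b) - a ∈ Fp p := by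
  rcases lt_or_ge |b| ((2 : ℝ) ^ p * (2 : ℝ) ^ ulpExp p (a + b)) with hsmall | hlarge
  · refine mem_fp_of_mem_grid hp (sub_mem (rd_mem_grid_ulpExp hp _) ha) ?_
    have hle := rd_le hp (a + b)
    have hlt := sub_rd_lt_ulp hp (a + b)
    rw [abs_lt] at hsmall ⊢
    constructor <;> linarith
  · have hbgrid := mem_grid_of_le_two_mul_abs hb (by linarith [abs_nonneg b])
    have hab := abs_lt_two_pow_mul_ulp p (a + b)
    refine rd_add_sub_left_mem_fp_of_add_mem_fp hp hb
      (mem_fp_of_mem_grid hp (add_mem ha hbgrid) (hab.trans ?_))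
    exact lt_add_of_pos_right _ (by positivity)

lemma rd_add_sub_left_mem_fp_of_abs_add_lt (hp : 1 ≤ p) (hb : b ∈ Fp p) (ha : a ∈ grid k)
    (h : |a + b| < (2 : ℝ) ^ p * (2 : ℝ) ^ k) : RD p (a + b) - a ∈ Fp p := by
  rcases eq_or_ne (a + b) 0 with h0 | h0
  · exact rd_add_sub_left_mem_fp_of_add_mem_fp hp hb (h0 ▸ zero_mem_fp p)
  · exact rd_add_sub_left_mem_fp_of_mem_grid_ulpExp hp hb
      (grid_antitone (ulpExp_le_of_abs_lt h0 h) ha)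

lemma rd_add_sub_left_mem_fp_of_abs_add_lt_two_mul (hp : 1 ≤ p) (hb : b ∈ Fp p)
    (ha : a ∈ grid k) (hbk : |b| < (2 : ℝ) ^ p * (2 : ℝ) ^ k)
    (h : |a + b| < 2 * ((2 : ℝ) ^ p * (2 : ℝ) ^ k)) : RD p (a + b) - a ∈ Fp p := by
  rcases lt_or_ge |a + b| ((2 : ℝ) ^ p * (2 : ℝ) ^ k) with hlt | hge
  · exact rd_add_sub_left_mem_fp_of_abs_add_lt hp hb ha hlt
  have hk : k < ulpExp p (a + b) := by
    by_contra! hle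
    have := mul_le_mul_of_nonneg_left (zpow_le_zpow_right₀ one_le_two hle)
      (by positivity : (0 : ℝ) ≤ 2 ^ p)
    linarith [abs_lt_two_pow_mul_ulp p (a + b)]
  refine mem_fp_of_mem_grid hp
    (sub_mem (grid_antitone hk.le (rd_mem_grid_ulpExp hp (a + b))) ha) ?_
  have hle := rd_le hp (a + b)
  have hlt := sub_rd_lt_of_abs_lt hp (k := k + 1) (x := a + b)
    (by rw [two_zpow_succ]; linarith)
  rw [two_zpow_succ] at hlt
  have hpred := abs_le.mp (le_sub_iff_add_le.mpr (abs_add_two_zpow_le hp hb hbk))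
  rw [abs_lt]
  constructor <;> linarith

lemma rd_add_sub_left_mem_fp_of_mem_grid (hp : 1 ≤ p) (ha : a ∈ Fp p) (hb : b ∈ Fp p)
    (hak : a ∈ grid k) (hbk : |b| < (2 : ℝ) ^ p * (2 : ℝ) ^ k) : RD p (a + b) - a ∈ Fp p := by
  -- the unit may be enlarged to the ulp of `a`
  obtain ⟨j, haj, hj, hbj⟩ : ∃ j : ℤ, a ∈ grid j ∧ |a| < (2 : ℝ) ^ p * (2 : ℝ) ^ j ∧
      |b| < (2 : ℝ) ^ p * (2 : ℝ) ^ j := by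
    have hlt := abs_lt_two_pow_mul_ulp p a
    rcases le_total k (ulpExp p a) with hle | hle
    · exact ⟨_, mem_grid_ulpExp ha, hlt, hbk.trans_le (by gcongr; norm_num)⟩
    · exact ⟨k, hak, hlt.trans_le (by gcongr; norm_num), hbk⟩
  exact rd_add_sub_left_mem_fp_of_abs_add_lt_two_mul hp hb haj hbj
    (by linarith [abs_add_le a b])

lemma rd_add_sub_left_mem_fp_of_abs_le (hp : 1 ≤ p) (ha : a ∈ Fp p) (hb : b ∈ Fp p)
    (h : |b| ≤ |a|) : RD p (a + b) - a ∈ Fp p :=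
  rd_add_sub_left_mem_fp_of_mem_grid hp ha hb (mem_grid_ulpExp ha)
    (h.trans_lt (abs_lt_two_pow_mul_ulp p a))

end InnerSubtraction

/-! ### `2Sum` and `Fast2Sum` -/

section ErrorTerms

variable {p : ℕ} {a b ε : ℝ}

lemma twoSum_fst (R : ℝ → ℝ) (a b : ℝ) : (twoSum R a b).1 = R (a + b) := rfl

lemma fast2Sum_fst (R : ℝ → ℝ) (a b : ℝ) : (fast2Sum R a b).1 = R (a + b) := rfl

lemma add_mem_fp_or_abs_rd_add_sub_right_lt (hp : 1 ≤ p) (ha : a ∈ Fp p) (hb : b ∈ Fp p) :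
    a + b ∈ Fp p ∨
    |RD p (a + b) - b| < (2 : ℝ) ^ p * (2 : ℝ) ^ ulpExp p (a + b) ∨
    |b| < (2 : ℝ) ^ p * (2 : ℝ) ^ ulpExp p (a + b) ∧
      |RD p (a + b) - b| < 2 * ((2 : ℝ) ^ p * (2 : ℝ) ^ ulpExp p (a + b)) := by
  have hab := abs_lt_two_pow_mul_ulp p (a + b)
  have hpos : (0 : ℝ) < 2 ^ ulpExp p (a + b) := by positivity
  rcases mem_grid_or_two_mul_abs_lt hb (ulpExp p (a + b)) with hbgrid | hbsmall
  · rcases mem_grid_or_two_mul_abs_lt ha (ulpExp p (a + b)) with hagrid | hasmall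
    · exact .inl (mem_fp_of_mem_grid hp (add_mem hagrid hbgrid) (by linarith))
    · right; left
      have hle := rd_le hp (a + b)
      have hlt := sub_rd_lt_ulp hp (a + b)
      have hulp := mul_le_mul_of_nonneg_right (two_le_two_pow hp) hpos.le
      have ha' := abs_lt.mp (lt_div_iff₀' two_pos |>.mpr hasmall)
      rw [abs_lt]
      constructor <;> linarith
  · right; right
    have hs := abs_rd_le hp (two_pow_mul_two_zpow_mem_fp hp _) hab.le
    have := abs_sub (RD p (a + b)) b
    constructor <;> linarith [abs_nonneg b]

lemma rd_add_sub_rd_mem_fp (hp : 1 ≤ p) (ha : a ∈ Fp p) (hb : b ∈ Fp p) :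
    RD p (a + b) - RD p (RD p (a + b) - b) ∈ Fp p := by
  have hs := rd_mem_grid_ulpExp hp (a + b)
  rw [← neg_sub, sub_eq_add_neg (RD p (a + b)) b]
  apply neg_mem_fp
  rcases add_mem_fp_or_abs_rd_add_sub_right_lt hp ha hb with hexact | hlt | ⟨hblt, hlt⟩
  · refine rd_add_sub_left_mem_fp_of_add_mem_fp hp (neg_mem_fp hb) ?_
    rwa [rd_eq_self hp hexact, add_neg_cancel_right]
  · exact rd_add_sub_left_mem_fp_of_abs_add_lt hp (neg_mem_fp hb) hs hlt
  · exact rd_add_sub_left_mem_fp_of_abs_add_lt_two_mul hp (neg_mem_fp hb) hs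
      (by rwa [abs_neg]) hlt

lemma rd_add_sub_sub_rd_lt_two_mul_ulp (hp : 1 ≤ p) (ha : a ∈ Fp p) (hb : b ∈ Fp p) :
    RD p (a + b) - b - RD p (RD p (a + b) - b) < 2 * (2 : ℝ) ^ ulpExp p (a + b) := by
  have hpos : (0 : ℝ) < 2 ^ ulpExp p (a + b) := by positivity
  rcases add_mem_fp_or_abs_rd_add_sub_right_lt hp ha hb with hexact | hlt | ⟨-, hlt⟩
  · rw [rd_eq_self hp hexact, add_sub_cancel_right, rd_eq_self hp ha, sub_self]
    positivity
  · linarith [sub_rd_lt_of_abs_lt hp hlt]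
  · rw [← two_zpow_succ]
    exact sub_rd_lt_of_abs_lt hp (by rw [two_zpow_succ]; linarith)

lemma twoSum_snd_eq_zero_of_add_mem_fp (hp : 1 ≤ p) (ha : a ∈ Fp p) (hb : b ∈ Fp p)
    (h : a + b ∈ Fp p) : (twoSum (RD p) a b).2 = 0 := by
  simp [twoSum, rd_eq_self hp h, rd_eq_self hp ha, rd_eq_self hp hb,
    rd_eq_self hp (zero_mem_fp p)]

lemma twoSum_snd_eq (hp : 1 ≤ p) (ha : a ∈ Fp p) (hb : b ∈ Fp p) :
    (twoSum (RD p) a b).2 = RD p (RD p (a - RD p (RD p (a + b) - b)) +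
      RD p (b - (RD p (a + b) - RD p (RD p (a + b) - b)))) := by
  simp only [twoSum, rd_eq_self hp (rd_add_sub_rd_mem_fp hp ha hb)]

lemma twoSum_fst_add_snd_le (hp : 1 ≤ p) (ha : a ∈ Fp p) (hb : b ∈ Fp p) :
    RD p (a + b) + (twoSum (RD p) a b).2 ≤ a + b := by
  rw [twoSum_snd_eq hp ha hb]
  generalize RD p (RD p (a + b) - b) = a'
  have h1 := rd_le hp (a - a')
  have h2 := rd_le hp (b - (RD p (a + b) - a'))
  have h3 := rd_le hp (RD p (a - a') + RD p (b - (RD p (a + b) - a')))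
  linarith

lemma abs_twoSum_snd_le_two_mul_ulp (hp : 1 ≤ p) (ha : a ∈ Fp p) (hb : b ∈ Fp p) :
    |(twoSum (RD p) a b).2| ≤ 2 * (2 : ℝ) ^ ulpExp p (a + b) := by
  have hle := twoSum_fst_add_snd_le hp ha hb
  have herr := sub_rd_lt_ulp hp (a + b)
  have hinner := rd_add_sub_sub_rd_lt_two_mul_ulp hp ha hb
  have hsub := rd_le hp (RD p (a + b) - b)
  have hsum := rd_le hp (a + b)
  have hmem : -(2 * (2 : ℝ) ^ ulpExp p (a + b)) ∈ Fp p := by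
    rw [← two_zpow_succ]
    exact neg_mem_fp (two_zpow_mem_fp hp _)
  rw [abs_le]
  refine ⟨?_, by linarith [(by positivity : (0 : ℝ) < 2 ^ ulpExp p (a + b))]⟩
  rw [twoSum_snd_eq hp ha hb]
  generalize RD p (RD p (a + b) - b) = a' at *
  have ha' := le_rd hp (zero_mem_fp p) (show 0 ≤ a - a' by linarith)
  have hb' := le_rd hp hmem (show _ ≤ b - (RD p (a + b) - a') by linarith)
  exact le_rd hp hmem (by linarith)

lemma abs_twoSum_snd_le_mul_abs (hp : 1 ≤ p) (hε : 2 ≤ ε * 2 ^ p) (ha : a ∈ Fp p)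
    (hb : b ∈ Fp p) : |(twoSum (RD p) a b).2| ≤ 2 * ε * |a + b| := by
  rcases eq_or_ne (a + b) 0 with h0 | h0
  · rw [twoSum_snd_eq_zero_of_add_mem_fp hp ha hb (h0 ▸ zero_mem_fp p), h0]
    simp
  · linarith [abs_twoSum_snd_le_two_mul_ulp hp ha hb, ulp_le_mul_abs hε h0]

lemma fast2Sum_snd_eq (hp : 1 ≤ p) (h : RD p (a + b) - a ∈ Fp p) :
    (fast2Sum (RD p) a b).2 = RD p (a + b - RD p (a + b)) := by
  simp only [fast2Sum, rd_eq_self hp h]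
  ring_nf

lemma fast2Sum_fst_add_snd_le (hp : 1 ≤ p) (h : RD p (a + b) - a ∈ Fp p) :
    RD p (a + b) + (fast2Sum (RD p) a b).2 ≤ a + b := by
  rw [fast2Sum_snd_eq hp h]
  linarith [rd_le hp (a + b - RD p (a + b))]

lemma abs_fast2Sum_snd_le_mul_abs (hp : 1 ≤ p) (hε : 2 ≤ ε * 2 ^ p)
    (h : RD p (a + b) - a ∈ Fp p) : |(fast2Sum (RD p) a b).2| ≤ ε * |a + b| := by
  have hnonneg : 0 ≤ a + b - RD p (a + b) := sub_nonneg.mpr (rd_le hp _)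
  rw [fast2Sum_snd_eq hp h, abs_of_nonneg (le_rd hp (zero_mem_fp p) hnonneg)]
  exact (rd_le hp _).trans (sub_rd_le_mul_abs hp hε _)

lemma fast2Sum_snd_eq_zero_of_add_mem_fp (hp : 1 ≤ p) (hb : b ∈ Fp p) (h : a + b ∈ Fp p) :
    (fast2Sum (RD p) a b).2 = 0 := by
  rw [fast2Sum_snd_eq hp (rd_add_sub_left_mem_fp_of_add_mem_fp hp hb h), rd_eq_self hp h,
    sub_self, rd_eq_self hp (zero_mem_fp p)]

end ErrorTerms

/-! ### Cancellation in the two calls of `Fast2Sum` -/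

section Cancellation

variable {p : ℕ} {a c x y : ℝ}

lemma exists_mem_grid_of_abs_add_le_of_abs_le (hp : 1 ≤ p) (hx : x ∈ Fp p) (hy : y ∈ Fp p)
    (hyx : |y| ≤ |x|) (h : |x + y| ≤ (|x| + |y|) / 3) :
    ∃ k : ℤ, x + y ∈ grid k ∧ x + y ∈ Fp p ∧ |x| + |y| < 3 * ((2 : ℝ) ^ p * (2 : ℝ) ^ k) := by
  have hdiff : |x| - |y| ≤ |x + y| := by
    simpa using abs_sub_abs_le_abs_sub x (-y)
  have hylt := abs_lt_two_pow_mul_ulp p y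
  have hgrid : x + y ∈ grid (ulpExp p y) := by
    refine add_mem ?_ (mem_grid_ulpExp hy)
    rcases eq_or_ne y 0 with rfl | h0
    · have hx0 : x = 0 := abs_eq_zero.mp (by rw [abs_zero] at *; linarith [abs_nonneg x])
      rw [hx0]
      exact zero_mem _
    · exact mem_grid_of_le_two_mul_abs hx (by linarith [two_pow_mul_ulp_le p h0])
  have hulp : (0 : ℝ) < 2 ^ ulpExp p y := by positivity
  exact ⟨_, hgrid, mem_fp_of_mem_grid hp hgrid (by linarith), by linarith⟩

lemma exists_mem_grid_of_abs_add_le (hp : 1 ≤ p) (hx : x ∈ Fp p) (hy : y ∈ Fp p)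
    (h : |x + y| ≤ (|x| + |y|) / 3) :
    ∃ k : ℤ, x + y ∈ grid k ∧ x + y ∈ Fp p ∧ |x| + |y| < 3 * ((2 : ℝ) ^ p * (2 : ℝ) ^ k) := by
  rcases le_total |y| |x| with hyx | hxy
  · exact exists_mem_grid_of_abs_add_le_of_abs_le hp hx hy hyx h
  · rw [add_comm x, add_comm |x|] at *
    exact exists_mem_grid_of_abs_add_le_of_abs_le hp hy hx hxy h

lemma two_le_one_sixteenth_mul_two_pow (hp : 5 ≤ p) : (2 : ℝ) ≤ 1 / 16 * 2 ^ p := by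
  linarith [pow_le_pow_right₀ (one_le_two : (1 : ℝ) ≤ 2) hp]

lemma first_fast2Sum_inner_mem_fp_of_abs_le (hp : 5 ≤ p) (hx : x ∈ Fp p) (hy : y ∈ Fp p)
    (hc : c ∈ Fp p) (h : |c| ≤ |x + y| / 7 + (|x| + |y|) / 4) :
    RD p (RD p (x + y) + c) - RD p (x + y) ∈ Fp p := by
  have hp1 : 1 ≤ p := by omega
  have hs := rd_mem_fp hp1 (x + y)
  rcases le_or_gt |x + y| ((|x| + |y|) / 3) with hcancel | hlarge
  · obtain ⟨k, hgrid, hmem, hlt⟩ := exists_mem_grid_of_abs_add_le hp1 hx hy hcancel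
    rw [rd_eq_self hp1 hmem] at hs ⊢
    exact rd_add_sub_left_mem_fp_of_mem_grid hp1 hs hc hgrid
      (by linarith [abs_nonneg x, abs_nonneg y])
  · have hrd := mul_abs_le_abs_rd hp1 (two_le_one_sixteenth_mul_two_pow hp) (x + y)
    exact rd_add_sub_left_mem_fp_of_abs_le hp1 hs hc (by linarith [abs_nonneg (x + y)])

lemma add_rd_mem_grid_of_abs_le (hp : 1 ≤ p) (ha : a ∈ Fp p) (h : |a + RD p x| ≤ |x| / 6) :
    a + RD p x ∈ grid (ulpExp p x - 1) := by
  refine add_mem ?_ (grid_antitone (by omega) (rd_mem_grid_ulpExp hp x))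
  rcases eq_or_ne x 0 with rfl | h0
  · rw [rd_eq_self hp (zero_mem_fp p), add_zero, abs_zero, zero_div] at h
    rw [abs_nonpos_iff.mp h]
    exact zero_mem _
  · refine mem_grid_of_le_two_mul_abs ha ?_
    have hdiff : |RD p x| - |a| ≤ |a + RD p x| := by
      simpa [add_comm] using abs_sub_abs_le_abs_sub (RD p x) (-a)
    have hsplit := two_zpow_succ (ulpExp p x - 1)
    rw [sub_add_cancel] at hsplit
    have hrd := two_pow_mul_ulp_le_two_mul_abs_rd hp h0
    have hlt := abs_lt_two_pow_mul_ulp p x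
    rw [hsplit] at hrd hlt
    linarith [abs_nonneg x]

lemma second_fast2Sum_inner_mem_fp_of_abs_le (hp : 3 ≤ p) (ha : a ∈ Fp p) (hx : x ∈ Fp p)
    (hy : y ∈ Fp p) (h : |a + RD p (x + y)| ≤ |x + y| / 6) :
    RD p (RD p (a + RD p (x + y)) +
        RD p ((twoSum (RD p) x y).2 + (fast2Sum (RD p) a (RD p (x + y))).2)) -
      RD p (a + RD p (x + y)) ∈ Fp p := by
  have hp1 : 1 ≤ p := by omega
  have hgrid := add_rd_mem_grid_of_abs_le hp1 ha h
  have hlt := abs_lt_two_pow_mul_ulp p (x + y)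
  have hsplit := two_zpow_succ (ulpExp p (x + y) - 1)
  rw [sub_add_cancel] at hsplit
  have hhalf : (0 : ℝ) < 2 ^ (ulpExp p (x + y) - 1) := by positivity
  have hexact : a + RD p (x + y) ∈ Fp p :=
    mem_fp_of_mem_grid hp1 hgrid (by rw [hsplit] at hlt; linarith [abs_nonneg (x + y)])
  rw [fast2Sum_snd_eq_zero_of_add_mem_fp hp1 (rd_mem_fp hp1 _) hexact, add_zero,
    rd_eq_self hp1 hexact]
  refine rd_add_sub_left_mem_fp_of_mem_grid hp1 hexact (rd_mem_fp hp1 _) hgrid ?_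
  have hw : |RD p (twoSum (RD p) x y).2| ≤ 2 * (2 : ℝ) ^ ulpExp p (x + y) := by
    refine abs_rd_le hp1 ?_ (abs_twoSum_snd_le_two_mul_ulp hp1 hx hy)
    rw [← two_zpow_succ]
    exact two_zpow_mem_fp hp1 _
  have hP := mul_le_mul_of_nonneg_right (pow_le_pow_right₀ (one_le_two : (1 : ℝ) ≤ 2) hp) hhalf.le
  linarith

end Cancellation

/-! ### Accurate double-word addition -/

section AccurateAdd

variable {p : ℕ} {xh xl yh yl : ℝ}

lemma second_fast2Sum_inner_mem_fp_of_le_abs {s c x y : ℝ} (hp : 5 ≤ p) (hx : x ∈ Fp p)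
    (hy : y ∈ Fp p) (hv : RD p (s + c) - s ∈ Fp p) (h : |x + y| / 6 ≤ |s + c|) :
    RD p (RD p (s + c) + RD p ((twoSum (RD p) x y).2 + (fast2Sum (RD p) s c).2)) -
      RD p (s + c) ∈ Fp p := by
  have hp1 : 1 ≤ p := by omega
  have hε := two_le_one_sixteenth_mul_two_pow hp
  refine rd_add_sub_left_mem_fp_of_abs_le hp1 (rd_mem_fp hp1 _) (rd_mem_fp hp1 _) ?_
  have htl := abs_twoSum_snd_le_mul_abs hp1 hε hx hy
  have hvl := abs_fast2Sum_snd_le_mul_abs hp1 hε hv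
  have hvh := mul_abs_le_abs_rd hp1 hε (s + c)
  have hw := abs_rd_le_mul_abs hp1 hε ((twoSum (RD p) x y).2 + (fast2Sum (RD p) s c).2)
  have hadd := abs_add_le (twoSum (RD p) x y).2 (fast2Sum (RD p) s c).2
  linarith [abs_nonneg (s + c)]

lemma abs_rd_twoSum_snd_add_rd_le (hp : 5 ≤ p) (hxh : xh ∈ Fp p) (hyh : yh ∈ Fp p) (x : ℝ) :
    |RD p ((twoSum (RD p) xh yh).2 + RD p x)| ≤ 17 / 16 * (|xh + yh| / 8 + 17 / 16 * |x|) := by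
  have hp1 : 1 ≤ p := by omega
  have hε := two_le_one_sixteenth_mul_two_pow hp
  have hsl := abs_twoSum_snd_le_mul_abs hp1 hε hxh hyh
  have hth := abs_rd_le_mul_abs hp1 hε x
  have hc := abs_rd_le_mul_abs hp1 hε ((twoSum (RD p) xh yh).2 + RD p x)
  have hadd := abs_add_le (twoSum (RD p) xh yh).2 (RD p x)
  linarith

lemma first_fast2Sum_inner_mem_fp {c : ℝ} (hp : 5 ≤ p) (hxh : xh ∈ Fp p) (hyh : yh ∈ Fp p)
    (hlow : |xl + yl| ≤ (|xh| + |yh|) / 5)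
    (hc : c = RD p ((twoSum (RD p) xh yh).2 + RD p (xl + yl))) :
    RD p (RD p (xh + yh) + c) - RD p (xh + yh) ∈ Fp p := by
  subst hc
  have hc := abs_rd_twoSum_snd_add_rd_le hp hxh hyh (xl + yl)
  exact first_fast2Sum_inner_mem_fp_of_abs_le hp hxh hyh (rd_mem_fp (by omega) _)
    (by linarith [abs_nonneg (xh + yh), abs_nonneg xh, abs_nonneg yh])

lemma second_fast2Sum_inner_mem_fp {c : ℝ} (hp : 5 ≤ p) (hxh : xh ∈ Fp p) (hxl : xl ∈ Fp p)
    (hyh : yh ∈ Fp p) (hyl : yl ∈ Fp p) (hlow : |xl + yl| ≤ (|xh| + |yh|) / 5)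
    (hc : c = RD p ((twoSum (RD p) xh yh).2 + RD p (xl + yl))) :
    RD p (RD p (RD p (xh + yh) + c) +
        RD p ((twoSum (RD p) xl yl).2 + (fast2Sum (RD p) (RD p (xh + yh)) c).2)) -
      RD p (RD p (xh + yh) + c) ∈ Fp p := by
  have hp1 : 1 ≤ p := by omega
  rcases le_or_gt (|xl + yl| / 6) |RD p (xh + yh) + c| with hlarge | hcancel
  · exact second_fast2Sum_inner_mem_fp_of_le_abs hp hxl hyl
      (first_fast2Sum_inner_mem_fp hp hxh hyh hlow hc) hlarge
  · have hhigh : |xh + yh| ≤ (|xh| + |yh|) / 3 := by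
      have hs := mul_abs_le_abs_rd hp1 (two_le_one_sixteenth_mul_two_pow hp) (xh + yh)
      have hcle := abs_rd_twoSum_snd_add_rd_le hp hxh hyh (xl + yl)
      rw [← hc] at hcle
      have hdiff : |RD p (xh + yh)| - |c| ≤ |RD p (xh + yh) + c| := by
        simpa using abs_sub_abs_le_abs_sub (RD p (xh + yh)) (-c)
      linarith [abs_nonneg xh, abs_nonneg yh]
    obtain ⟨-, -, hexact, -⟩ := exists_mem_grid_of_abs_add_le hp1 hxh hyh hhigh
    have hcth : c = RD p (xl + yl) := by
      rw [hc, twoSum_snd_eq_zero_of_add_mem_fp hp1 hxh hyh hexact, zero_add,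
        rd_eq_self hp1 (rd_mem_fp hp1 _)]
    subst hcth
    exact second_fast2Sum_inner_mem_fp_of_abs_le (by omega) (rd_mem_fp hp1 _) hxl hyl hcancel.le

lemma accurateAdd_rd_le (hp : 5 ≤ p) (hxh : xh ∈ Fp p) (hxl : xl ∈ Fp p) (hyh : yh ∈ Fp p)
    (hyl : yl ∈ Fp p) (hx : |xl| ≤ |xh| / 5) (hy : |yl| ≤ |yh| / 5) :
    (accurateAdd (RD p) xh xl yh yl).1 + (accurateAdd (RD p) xh xl yh yl).2 ≤
      xh + xl + yh + yl := by
  have hp1 : 1 ≤ p := by omega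
  have hlow : |xl + yl| ≤ (|xh| + |yh|) / 5 := by linarith [abs_add_le xl yl]
  have hs := twoSum_fst_add_snd_le hp1 hxh hyh
  have ht := twoSum_fst_add_snd_le hp1 hxl hyl
  simp only [accurateAdd, twoSum_fst, fast2Sum_fst]
  obtain ⟨c, hc⟩ : ∃ c, c = RD p ((twoSum (RD p) xh yh).2 + RD p (xl + yl)) := ⟨_, rfl⟩
  have hv := fast2Sum_fst_add_snd_le hp1 (first_fast2Sum_inner_mem_fp hp hxh hyh hlow hc)
  have hz := fast2Sum_fst_add_snd_le hp1
    (second_fast2Sum_inner_mem_fp hp hxh hxl hyh hyl hlow hc)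
  have hcle := hc.trans_le (rd_le hp1 _)
  rw [← hc]
  set sh := RD p (xh + yh)
  set sl := (twoSum (RD p) xh yh).2
  set th := RD p (xl + yl)
  set tl := (twoSum (RD p) xl yl).2
  set vh := RD p (sh + c)
  set vl := (fast2Sum (RD p) sh c).2
  set w := RD p (tl + vl)
  have hw : w ≤ tl + vl := rd_le hp1 _
  calc RD p (vh + w) + (fast2Sum (RD p) vh w).2 ≤ vh + w := hz
    _ ≤ vh + vl + tl := by linarith
    _ ≤ sh + c + tl := by gcongr
    _ ≤ (sh + sl) + (th + tl) := by linarith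
    _ ≤ (xh + yh) + (xl + yl) := add_le_add hs ht
    _ = xh + xl + yh + yl := by ring

end AccurateAdd

/-! ### Exchanging the rounding directions -/

lemma ru_eq_neg_rd_neg (p : ℕ) (x : ℝ) : RU p x = -RD p (-x) := by
  have hset : {f : ℝ | f ∈ Fp p ∧ f ≤ -x} = -{f : ℝ | f ∈ Fp p ∧ x ≤ f} := by
    ext f
    have hmem : -f ∈ Fp p ↔ f ∈ Fp p := ⟨fun h => neg_neg f ▸ neg_mem_fp h, neg_mem_fp⟩
    simp [hmem, le_neg]
  rw [RU, RD, hset, Real.sInf_def]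

lemma twoSum_ru (p : ℕ) (a b : ℝ) : twoSum (RU p) a b = -twoSum (RD p) (-a) (-b) := by
  simp only [twoSum, ru_eq_neg_rd_neg, Prod.neg_mk, Prod.mk.injEq]
  ring_nf
  simp

lemma fast2Sum_ru (p : ℕ) (a b : ℝ) : fast2Sum (RU p) a b = -fast2Sum (RD p) (-a) (-b) := by
  simp only [fast2Sum, ru_eq_neg_rd_neg, Prod.neg_mk, Prod.mk.injEq]
  ring_nf
  simp

lemma accurateAdd_ru (p : ℕ) (xh xl yh yl : ℝ) :
    accurateAdd (RU p) xh xl yh yl = -accurateAdd (RD p) (-xh) (-xl) (-yh) (-yl) := by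
  simp only [accurateAdd, twoSum_ru, fast2Sum_ru, ru_eq_neg_rd_neg, Prod.fst_neg, Prod.snd_neg,
    neg_neg, neg_add_rev]
  ring_nf

lemma abs_le_div_five_of_le_mul {u o a b : ℝ} (hu : 0 < u) (ho : o ≤ 1 / (8 * u) - 2)
    (h : |a| ≤ o * u * |b|) : |a| ≤ |b| / 5 := by
  have hou : o * u ≤ 1 / 5 := by
    calc o * u ≤ (1 / (8 * u) - 2) * u := by gcongr
      _ = 1 / 8 - 2 * u := by field_simp
      _ ≤ 1 / 5 := by linarith
  calc |a| ≤ o * u * |b| := h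
    _ ≤ 1 / 5 * |b| := by gcongr
    _ = |b| / 5 := by ring

theorem accurate_directed_rounding_error_sign_general
    (p : ℕ) (hp : 5 ≤ p) (xh xl yh yl : ℝ)
    (hxh : xh ∈ Fp p) (hxl : xl ∈ Fp p) (hyh : yh ∈ Fp p) (hyl : yl ∈ Fp p)
    (hovx : |xl| ≤ |xh| / 5) (hovy : |yl| ≤ |yh| / 5) :
    (accurateAdd (RD p) xh xl yh yl).1 + (accurateAdd (RD p) xh xl yh yl).2 ≤
        xh + xl + yh + yl ∧
      xh + xl + yh + yl ≤
        (accurateAdd (RU p) xh xl yh yl).1 + (accurateAdd (RU p) xh xl yh yl).2 := by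
  refine ⟨accurateAdd_rd_le hp hxh hxl hyh hyl hovx hovy, ?_⟩
  have hneg := accurateAdd_rd_le hp (neg_mem_fp hxh) (neg_mem_fp hxl) (neg_mem_fp hyh)
    (neg_mem_fp hyl) (by simpa only [abs_neg] using hovx) (by simpa only [abs_neg] using hovy)
  rw [accurateAdd_ru, Prod.fst_neg, Prod.snd_neg]
  linarith

theorem accurate_directed_rounding_error_sign
    (p : ℕ) (hp : 6 ≤ p) (u : ℝ) (hu : u = (2 : ℝ) ^ (1 - (p : ℤ)))
    (ox oy : ℝ) (hox1 : 1 ≤ ox) (hox2 : ox ≤ 1 / (8 * u) - 2)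
    (hoy1 : 1 ≤ oy) (hoy2 : oy ≤ 1 / (8 * u) - 2)
    (xh xl yh yl : ℝ)
    (hxh : xh ∈ Fp p) (hxl : xl ∈ Fp p) (hyh : yh ∈ Fp p) (hyl : yl ∈ Fp p)
    (hovx : |xl| ≤ ox * u * |xh|) (hovy : |yl| ≤ oy * u * |yh|) :
    (accurateAdd (RD p) xh xl yh yl).1 + (accurateAdd (RD p) xh xl yh yl).2 ≤
        xh + xl + yh + yl ∧
      xh + xl + yh + yl ≤
        (accurateAdd (RU p) xh xl yh yl).1 + (accurateAdd (RU p) xh xl yh yl).2 := by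
  have hu0 : 0 < u := hu ▸ by positivity
  exact accurate_directed_rounding_error_sign_general p (by omega) xh xl yh yl hxh hxl hyh hyl
    (abs_le_div_five_of_le_mul hu0 hox2 hovx) (abs_le_div_five_of_le_mul hu0 hoy2 hovy)
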